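/- Let f : ℝ → ℝ be a continuous function for which there exist A, α > 0 with |f(x)| ≤ A(1+|x|)^α for all x ∈ ℝ, and suppose f has only finitely many zeros. Then for every integer n ≥ 0 there exist C > 0 and T₀ > 0 such that 0 ≤ ∫_ℝ |f(x)| u_T(x) dx − |∫_ℝ f(x) u_T(x) dx| ≤ C T^{−n} for all T ≥ T₀ (both integrals converging absolutely). -/

import Mathlib

open MeasureTheory Set

noncomputable section

/-- `e2 z = e^{2πiz}`. -/
def e2 (z : ℂ) : ℂ := Complex.exp (2 * Real.pi * Complex.I * z)

/-- `φ₀` is a smooth even bump function supported in `[-1,1]` with `0 ≤ φ₀ ≤ 1`,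
`φ₀(0) = 1` and `∫ φ₀² = 1`. -/
def IsBumpBase (φ₀ : ℝ → ℝ) : Prop :=
  ContDiff ℝ (⊤ : ℕ∞) φ₀ ∧ (∀ x, φ₀ (-x) = φ₀ x) ∧ tsupport φ₀ ⊆ Set.Icc (-1) 1 ∧
  (∀ x, 0 ≤ φ₀ x ∧ φ₀ x ≤ 1) ∧ φ₀ 0 = 1 ∧ (∫ u : ℝ, (φ₀ u) ^ 2) = 1

/-- `ψ(x) = φ₀(log x)`. -/
def psiF (φ₀ : ℝ → ℝ) (x : ℝ) : ℝ := φ₀ (Real.log x)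

/-- `λ(x) = ∫₀^∞ ψ(y)ψ(x/y) dy/y`. -/
def lamF (φ₀ : ℝ → ℝ) (x : ℝ) : ℝ :=
  ∫ y in Set.Ioi (0 : ℝ), psiF φ₀ y * psiF φ₀ (x / y) / y

/-- `λ_T(x) = T x^{-2iT^{3/2}} λ(x^T)`. -/
def lamT (φ₀ : ℝ → ℝ) (T x : ℝ) : ℂ :=
  (T : ℂ) * (x : ℂ) ^ (-(2 * Complex.I * ((T ^ ((3 : ℝ) / 2) : ℝ) : ℂ))) * (lamF φ₀ (x ^ T) : ℂ)

/-- `u_T(t) = ∫₀^∞ λ_T(x) x^{it-1} dx`. -/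
def uT (φ₀ : ℝ → ℝ) (T t : ℝ) : ℂ :=
  ∫ x in Set.Ioi (0 : ℝ), lamT φ₀ T x * (x : ℂ) ^ (Complex.I * (t : ℂ) - 1)

open scoped FourierTransform ContDiff SchwartzMap Convolution in
lemma integral_Ioi_exp {E : Type*} [NormedAddCommGroup E] [NormedSpace ℝ E] (F : ℝ → E) :
    ∫ x in Set.Ioi (0 : ℝ), F x = ∫ w : ℝ, Real.exp w • F (Real.exp w) := by
  have h := integral_image_eq_integral_abs_deriv_smul (s := Set.univ) (f := Real.exp)
    (f' := Real.exp) MeasurableSet.univ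
    (fun x _ => (Real.hasDerivAt_exp x).hasDerivWithinAt) Real.exp_injective.injOn F
  rw [Set.image_univ, Real.range_exp] at h
  rw [h, setIntegral_univ]
  simp [abs_of_pos (Real.exp_pos _)]

lemma lamF_exp (φ : ℝ → ℝ) (w : ℝ) :
    lamF φ (Real.exp w) = ∫ u : ℝ, φ u * φ (w - u) := by
  unfold lamF psiF
  rw [integral_Ioi_exp]
  congr 1
  ext u
  rw [← Real.exp_sub, Real.log_exp, Real.log_exp, smul_eq_mul]
  field_simp

lemma cexp_cpow (v : ℝ) (z : ℂ) : ((Real.exp v : ℝ) : ℂ) ^ z = Complex.exp (v * z) := by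
  rw [Complex.cpow_def_of_ne_zero (by exact_mod_cast (Real.exp_pos v).ne'),
    ← Complex.ofReal_log (Real.exp_pos v).le, Real.log_exp]

lemma uT_eq (φ : ℝ → ℝ) (T : ℝ) (hT : 0 < T) (t : ℝ) :
    uT φ T t = ∫ w : ℝ, Complex.exp (Complex.I * w * ((t - 2 * T ^ ((3 : ℝ) / 2)) / T : ℝ)) *
      ((∫ u : ℝ, φ u * φ (w - u) : ℝ) : ℂ) := by
  unfold uT lamT
  rw [integral_Ioi_exp]
  set g : ℝ → ℂ := fun w => Complex.exp (Complex.I * w * ((t - 2 * T ^ ((3 : ℝ) / 2)) / T : ℝ)) *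
      ((∫ u : ℝ, φ u * φ (w - u) : ℝ) : ℂ) with hg
  have h1 := Measure.integral_comp_mul_left g T
  have h2 : ∫ w, g w = T • ∫ x, g (T * x) := by
    rw [h1, abs_of_pos (inv_pos.mpr hT), smul_smul, mul_inv_cancel₀ hT.ne', one_smul]
  rw [h2, ← integral_smul]
  congr 1
  ext v
  simp only [hg]
  rw [← Real.exp_mul, lamF_exp, cexp_cpow, cexp_cpow, mul_comm v T, Complex.real_smul,
    Complex.real_smul, Complex.ofReal_exp]
  have e1 : Complex.exp (Complex.I * ((T * v : ℝ) : ℂ) * ((t - 2 * T ^ ((3 : ℝ) / 2)) / T : ℝ))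
      = Complex.exp v * Complex.exp (v * -(2 * Complex.I * ((T ^ ((3 : ℝ) / 2) : ℝ) : ℂ))) *
        Complex.exp (v * (Complex.I * t - 1)) := by
    rw [← Complex.exp_add, ← Complex.exp_add]
    congr 1
    have : (T : ℂ) ≠ 0 := by exact_mod_cast hT.ne'
    push_cast
    field_simp
    ring
  rw [e1]
  ring

open scoped FourierTransform ContDiff SchwartzMap Convolution in
lemma uT_struct (φ : ℝ → ℝ) (hφ : IsBumpBase φ) :
    ∃ G : ℝ → ℝ, Continuous G ∧ (∀ s, 0 ≤ G s) ∧
      (∀ k : ℕ, ∃ C : ℝ, 0 < C ∧ ∀ s, (1 + |s|) ^ k * G s ≤ C) ∧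
      ∀ T : ℝ, 0 < T → ∀ t, (uT φ T t).re = G ((t - 2 * T ^ ((3 : ℝ) / 2)) / T) := by
  obtain ⟨hs, hev, hsupp, -, -, -⟩ := hφ
  have hcs : HasCompactSupport φ := HasCompactSupport.of_support_subset_isCompact isCompact_Icc ((subset_tsupport φ).trans hsupp)
  set φc : ℝ → ℂ := fun x => (φ x : ℂ) with hφc
  have hcs' : HasCompactSupport φc := hcs.comp_left (g := fun x : ℝ => (x : ℂ)) (by simp)
  have hsm : ContDiff ℝ ∞ φc := Complex.ofRealCLM.contDiff.comp hs
  set Φ : 𝓢(ℝ, ℂ) := hcs'.toSchwartzMap hsm with hΦ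
  have hΦc : (Φ : ℝ → ℂ) = φc := rfl
  have hF : ∀ x, (𝓕 Φ) x = 𝓕 φc x := fun x => rfl
  have hint : Integrable φc := by rw [← hΦc]; exact Φ.integrable
  -- reality
  have hreal : ∀ x, (starRingEnd ℂ) (𝓕 φc x) = 𝓕 φc x := by
    intro x
    rw [Real.fourier_real_eq_integral_exp_smul, ← integral_conj,
      ← integral_neg_eq_self]
    congr 1
    ext v
    simp only [hφc, hev, smul_eq_mul, map_mul, Complex.conj_ofReal, ← Complex.exp_conj, Complex.conj_I]
    congr 2
    push_cast
    ring
  refine ⟨fun s => ‖(𝓕 Φ) (-s / (2 * Real.pi))‖ ^ 2, ?_, fun s => by positivity, ?_, ?_⟩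
  · have := (𝓕 Φ).continuous
    fun_prop
  · intro k
    have hd : ∀ k : ℕ, ∃ C : ℝ, 0 < C ∧ ∀ x, (1 + |x|) ^ k * ‖(𝓕 Φ) x‖ ≤ C := by
      intro k
      have h := fun x => SchwartzMap.one_add_le_sup_seminorm_apply (𝕜 := ℝ) (m := (k, 0)) le_rfl le_rfl (𝓕 Φ) x
      refine ⟨_, ?_, fun x => ((by simpa using h x : _ ≤ _).trans (le_add_of_nonneg_right zero_le_one))⟩
      positivity
    obtain ⟨C0, hC0, h0⟩ := hd 0
    obtain ⟨C1, hC1, h1⟩ := hd k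
    refine ⟨7 ^ k * (C0 * C1), by positivity, fun s => ?_⟩
    set x := -s / (2 * Real.pi) with hx
    have hπ := Real.pi_pos
    have hsx : 1 + |s| ≤ 7 * (1 + |x|) := by
      have : |s| = 2 * Real.pi * |x| := by
        rw [hx, abs_div, abs_neg, abs_of_pos (by positivity : 0 < 2 * Real.pi)]
        field_simp
      rw [this]
      have h3 : Real.pi < 3.15 := Real.pi_lt_d2
      nlinarith [abs_nonneg x]
    have h0' := h0 x
    have h1' := h1 x
    simp only [pow_zero, one_mul] at h0'
    calc (1 + |s|) ^ k * ‖(𝓕 Φ) x‖ ^ 2 ≤ (7 * (1 + |x|)) ^ k * ‖(𝓕 Φ) x‖ ^ 2 := by gcongr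
      _ = 7 ^ k * (‖(𝓕 Φ) x‖ * ((1 + |x|) ^ k * ‖(𝓕 Φ) x‖)) := by rw [mul_pow]; ring
      _ ≤ 7 ^ k * (C0 * C1) := by gcongr
  · intro T hT t
    rw [uT_eq φ T hT t]
    set s := (t - 2 * T ^ ((3 : ℝ) / 2)) / T
    have hconv := Real.fourier_mul_convolution_eq (f₁ := φc) (f₂ := φc) hint hint (-s / (2 * Real.pi))
    have : ∫ w : ℝ, Complex.exp (Complex.I * w * (s : ℝ)) * ((∫ u : ℝ, φ u * φ (w - u) : ℝ) : ℂ)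
        = 𝓕 φc (-s / (2 * Real.pi)) * 𝓕 φc (-s / (2 * Real.pi)) := by
      rw [← hconv, Real.fourier_real_eq_integral_exp_smul]
      congr 1
      ext w
      rw [smul_eq_mul]
      congr 1
      · congr 1
        have : (Real.pi : ℂ) ≠ 0 := by exact_mod_cast Real.pi_ne_zero
        push_cast
        field_simp
      · rw [← integral_complex_ofReal]
        simp [convolution, hφc]
    rw [this]
    simp only [hF]
    obtain ⟨r, hr⟩ := Complex.conj_eq_iff_real.mp (hreal (-s / (2 * Real.pi)))
    rw [hr, ← Complex.ofReal_mul, Complex.ofReal_re, Complex.norm_real, Real.norm_eq_abs, sq_abs, sq]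

lemma eventually_sign (f : ℝ → ℝ) (hf : Continuous f) (hz : {x : ℝ | f x = 0}.Finite) :
    ∃ R σ : ℝ, |σ| = 1 ∧ ∀ x, R ≤ x → |f x| = σ * f x := by
  obtain ⟨M, hM⟩ := hz.bddAbove
  have hne : ∀ x, M + 1 ≤ x → f x ≠ 0 := fun x hx h => by
    have := hM (show x ∈ {x : ℝ | f x = 0} from h)
    linarith
  rcases lt_or_gt_of_ne (hne (M + 1) le_rfl) with h | h
  · refine ⟨M + 1, -1, by simp, fun x hx => ?_⟩
    have : f x < 0 := by
      by_contra hc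
      obtain ⟨y, hy, hy0⟩ := intermediate_value_Icc hx hf.continuousOn ⟨h.le, not_lt.mp hc⟩
      exact hne y hy.1 hy0
    rw [abs_of_neg this]; ring
  · refine ⟨M + 1, 1, by simp, fun x hx => ?_⟩
    have : 0 < f x := by
      by_contra hc
      obtain ⟨y, hy, hy0⟩ := intermediate_value_Icc' hx hf.continuousOn ⟨not_lt.mp hc, h.le⟩
      exact hne y hy.1 hy0
    rw [abs_of_pos this]; ring

lemma tail_aux (T P x s : ℝ) (hT : 1 ≤ T) (hP : 0 < P) (hP2 : P ^ 2 = T ^ 3) (hx : x ≤ P)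
    (hs : s = (x - 2 * P) / T) :
    1 + |x| ≤ 8 * (1 + |s|) ^ 3 ∧ T ≤ 8 * (1 + |s|) ^ 3 := by
  have hPT : T ≤ P := by
    by_contra hc
    push Not at hc
    nlinarith [mul_pos hP hP, mul_nonneg (sub_nonneg.mpr hT) (sq_nonneg T)]
  have hsT : |s| * T = 2 * P - x := by
    rw [hs, abs_div, abs_of_pos (by linarith : 0 < T), abs_of_neg (by linarith)]
    field_simp
    ring
  set S := 1 + |s| with hS
  have hS1 : 0 < S := by positivity
  set u := |x| + P with hu
  have hu0 : 0 < u := by positivity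
  have h1 : u ≤ 2 * S * T := by
    have : 2 * S * T = 2 * T + 2 * (|s| * T) := by rw [hS]; ring
    rw [this, hsT, hu]
    rcases abs_cases x with ⟨h, _⟩ | ⟨h, _⟩ <;> rw [h] <;> linarith
  have h2 : u ^ 3 ≤ 8 * S ^ 3 * u ^ 2 := by
    calc u ^ 3 ≤ (2 * S * T) ^ 3 := by gcongr
      _ = 8 * S ^ 3 * P ^ 2 := by rw [hP2]; ring
      _ ≤ 8 * S ^ 3 * u ^ 2 := by gcongr; rw [hu]; linarith [abs_nonneg x]
  have h3 : u ≤ 8 * S ^ 3 := by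
    have : u * u ^ 2 ≤ 8 * S ^ 3 * u ^ 2 := by nlinarith
    exact le_of_mul_le_mul_right this (by positivity)
  constructor
  · rw [hu] at h3; linarith
  · rw [hu] at h3; linarith [abs_nonneg x]


/-- For `f` continuous of polynomial growth with only finitely many
zeros, `∫ |f| u_T − |∫ f u_T|` is nonnegative and decays rapidly as `T → ∞`. -/
theorem uT_sign_change_detector
    (φ₀ : ℝ → ℝ) (hφ₀ : IsBumpBase φ₀)
    (f : ℝ → ℝ) (hf : Continuous f) (A α : ℝ) (hA : 0 < A) (hα : 0 < α)
    (hbd : ∀ x : ℝ, |f x| ≤ A * (1 + |x|) ^ α)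
    (hzeros : {x : ℝ | f x = 0}.Finite) :
    ∀ n : ℕ, ∃ C : ℝ, 0 < C ∧ ∃ T₀ : ℝ, 0 < T₀ ∧ ∀ T : ℝ, T₀ ≤ T →
      Integrable (fun x : ℝ => |f x| * (uT φ₀ T x).re) ∧
      Integrable (fun x : ℝ => f x * (uT φ₀ T x).re) ∧
      0 ≤ (∫ x : ℝ, |f x| * (uT φ₀ T x).re) - |∫ x : ℝ, f x * (uT φ₀ T x).re| ∧
      (∫ x : ℝ, |f x| * (uT φ₀ T x).re) - |∫ x : ℝ, f x * (uT φ₀ T x).re| ≤ C / T ^ n := by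
  intro n
  obtain ⟨G, hGc, hG0, hGd, hGu⟩ := uT_struct φ₀ hφ₀
  obtain ⟨R, σ, hσ, hR⟩ := eventually_sign f hf hzeros
  obtain ⟨m, hm⟩ := exists_nat_ge (α + 2)
  have hfm : ∀ x : ℝ, |f x| ≤ A * (1 + |x|) ^ m * (1 + ‖x‖) ^ (-2 : ℝ) := by
    intro x
    refine (hbd x).trans ?_
    rw [mul_assoc, Real.norm_eq_abs, ← Real.rpow_natCast, ← Real.rpow_add (by positivity)]
    have h1 : 1 ≤ 1 + |x| := by linarith [abs_nonneg x]
    gcongr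
    linarith
  have hI : Integrable (fun x : ℝ => (1 + ‖x‖) ^ (-2 : ℝ)) :=
    integrable_one_add_norm (by simp)
  set J := ∫ x : ℝ, (1 + ‖x‖) ^ (-2 : ℝ) with hJ
  have hJ0 : 0 ≤ J := integral_nonneg fun x => by positivity
  obtain ⟨C1, hC1, hd1⟩ := hGd m
  obtain ⟨C2, hC2, hd2⟩ := hGd (3 * (m + n))
  refine ⟨2 * A * (8 ^ (m + n) * C2) * J + 1, by positivity, max 1 R, by positivity, ?_⟩
  intro T hT
  have hT1 : 1 ≤ T := (le_max_left _ _).trans hT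
  have hTR : R ≤ T := (le_max_right _ _).trans hT
  have hT0 : 0 < T := by linarith
  simp only [hGu T hT0]
  set P := T ^ ((3 : ℝ) / 2) with hP
  have hP0 : 0 < P := by positivity
  have hP2 : P ^ 2 = T ^ 3 := by
    rw [hP, ← Real.rpow_natCast, ← Real.rpow_mul hT0.le, ← Real.rpow_natCast]
    norm_num
  have hPT : T ≤ P := by
    rw [hP]
    exact Real.self_le_rpow_of_one_le hT1 (by norm_num)
  have hmeas : Continuous (fun x : ℝ => G ((x - 2 * P) / T)) := by fun_prop
  have hi1 : Integrable (fun x : ℝ => |f x| * G ((x - 2 * P) / T)) := by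
    refine Integrable.mono' (hI.const_mul (A * ((1 + 2 * P + T) ^ m * C1)))
      (hf.abs.mul hmeas).aestronglyMeasurable (Filter.Eventually.of_forall fun x => ?_)
    have hGx := hG0 ((x - 2 * P) / T)
    have hdx := hd1 ((x - 2 * P) / T)
    rw [Real.norm_eq_abs, abs_of_nonneg (by positivity)]
    have hxs : 1 + |x| ≤ (1 + 2 * P + T) * (1 + |(x - 2 * P) / T|) := by
      have h1 : T * |(x - 2 * P) / T| = |x - 2 * P| := by
        rw [abs_div, abs_of_pos hT0]; field_simp
      have h2 : |x| ≤ |x - 2 * P| + 2 * P := by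
        calc |x| = |(x - 2 * P) + 2 * P| := by ring_nf
          _ ≤ |x - 2 * P| + |2 * P| := abs_add_le _ _
          _ = _ := by rw [abs_of_pos (by positivity : 0 < 2 * P)]
      nlinarith [abs_nonneg ((x - 2 * P) / T)]
    set s := (x - 2 * P) / T
    calc |f x| * G s ≤ (A * (1 + |x|) ^ m * (1 + ‖x‖) ^ (-2 : ℝ)) * G s := by
          gcongr; exact hfm x
      _ ≤ (A * ((1 + 2 * P + T) * (1 + |s|)) ^ m * (1 + ‖x‖) ^ (-2 : ℝ)) * G s := by gcongr
      _ = A * ((1 + 2 * P + T) ^ m * ((1 + |s|) ^ m * G s)) * (1 + ‖x‖) ^ (-2 : ℝ) := by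
          rw [mul_pow]; ring
      _ ≤ _ := by gcongr
  have hi2 : Integrable (fun x : ℝ => f x * G ((x - 2 * P) / T)) := by
    refine hi1.mono' (hf.mul hmeas).aestronglyMeasurable (Filter.Eventually.of_forall fun x => ?_)
    rw [norm_mul, Real.norm_eq_abs, Real.norm_eq_abs, abs_of_nonneg (hG0 _)]
  refine ⟨hi1, hi2, ?_, ?_⟩
  · have h := abs_integral_le_integral_abs (μ := volume) (f := fun x : ℝ => f x * G ((x - 2 * P) / T))
    simp only [abs_mul, abs_of_nonneg (hG0 _)] at h
    linarith
  · have h1 : σ * ∫ x : ℝ, f x * G ((x - 2 * P) / T) ≤ |∫ x : ℝ, f x * G ((x - 2 * P) / T)| := by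
      refine (le_abs_self _).trans ?_
      rw [abs_mul, hσ, one_mul]
    have h2 : (∫ x : ℝ, |f x| * G ((x - 2 * P) / T)) - σ * ∫ x : ℝ, f x * G ((x - 2 * P) / T)
        = ∫ x : ℝ, (|f x| * G ((x - 2 * P) / T) - σ * (f x * G ((x - 2 * P) / T))) := by
      rw [integral_sub hi1 (hi2.const_mul σ), integral_const_mul]
    have h3 : ∫ x : ℝ, (|f x| * G ((x - 2 * P) / T) - σ * (f x * G ((x - 2 * P) / T)))
        ≤ ∫ x : ℝ, (2 * A * (8 ^ (m + n) * C2) / T ^ n) * (1 + ‖x‖) ^ (-2 : ℝ) := by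
      refine integral_mono (hi1.sub (hi2.const_mul σ)) (hI.const_mul _) fun x => ?_
      have hGx := hG0 ((x - 2 * P) / T)
      dsimp only
      by_cases hx : R ≤ x
      · have : |f x| * G ((x - 2 * P) / T) - σ * (f x * G ((x - 2 * P) / T)) = 0 := by
          rw [hR x hx]; ring
        rw [this]
        positivity
      · obtain ⟨ha, hb⟩ := tail_aux T P x _ hT1 hP0 hP2 (by linarith) rfl
        have hdx := hd2 ((x - 2 * P) / T)
        set s := (x - 2 * P) / T
        have hk : -(σ * f x) ≤ |f x| := by
          refine (neg_le_abs _).trans ?_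
          rw [abs_mul, hσ, one_mul]
        have hkey : (1 + |x|) ^ m * G s ≤ 8 ^ (m + n) * C2 / T ^ n := by
          rw [le_div_iff₀ (by positivity)]
          calc (1 + |x|) ^ m * G s * T ^ n
              ≤ (8 * (1 + |s|) ^ 3) ^ m * G s * (8 * (1 + |s|) ^ 3) ^ n := by gcongr
            _ = 8 ^ (m + n) * ((1 + |s|) ^ (3 * (m + n)) * G s) := by
                rw [pow_mul, pow_add _ m n, pow_add _ m n, mul_pow, mul_pow]; ring
            _ ≤ _ := by gcongr
        calc |f x| * G s - σ * (f x * G s) = (|f x| + -(σ * f x)) * G s := by ring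
          _ ≤ (|f x| + |f x|) * G s := by gcongr
          _ = 2 * (|f x| * G s) := by ring
          _ ≤ 2 * ((A * (1 + |x|) ^ m * (1 + ‖x‖) ^ (-2 : ℝ)) * G s) := by
              gcongr; exact hfm x
          _ = 2 * A * ((1 + |x|) ^ m * G s) * (1 + ‖x‖) ^ (-2 : ℝ) := by ring
          _ ≤ 2 * A * (8 ^ (m + n) * C2 / T ^ n) * (1 + ‖x‖) ^ (-2 : ℝ) := by gcongr
          _ = _ := by ring
    rw [integral_const_mul, ← hJ] at h3
    have h4 : (2 * A * (8 ^ (m + n) * C2) / T ^ n) * J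
        ≤ (2 * A * (8 ^ (m + n) * C2) * J + 1) / T ^ n := by
      rw [div_mul_eq_mul_div]
      gcongr
      linarith
    linarith
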